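/- Let F be a finite field of odd cardinality q, let χ be the quadratic character of F, let ψ : F → ℂ be a nontrivial additive character, let ε ∈ F be a nonsquare and v ∈ F nonzero. For c ∈ F nonzero and s ∈ {1, −1} let S(c, s) = {(x, y) ∈ F² : x·y = c and χ(x) = s}. Consider the alternating combination T'(f) = Σ_{S(v²,χ(v))} f − Σ_{S(v²,χ(εv))} f − Σ_{S(εv²,χ(v))} f + Σ_{S(εv²,χ(εv))} f, where each sum is of f(x, y) over the indicated set. Then: (i) for every b ∈ F, T'((x,y) ↦ ψ(x·b)) = 0; and (ii) for every a ∈ F, T'((x,y) ↦ ψ(y·a)) = 2·χ(v)·χ(a)·Σ_{t ∈ F} χ(t)·ψ(t). (This is equation (eqn:hatvarphi01) of the paper for the function φ₍₁₎, in raw exponential-sum form.) -/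

import Mathlib

open Finset

/-- The alternating combination `T'(f) = Σ_{S(v²,χ(v))} f − Σ_{S(v²,χ(εv))} f
− Σ_{S(εv²,χ(v))} f + Σ_{S(εv²,χ(εv))} f`, where
`S(c,s) = {(x,y) ∈ F² : x·y = c ∧ χ(x) = s}`. -/
noncomputable def Tsum1 {F : Type*} [Field F] [Fintype F] [DecidableEq F]
    (χ : F → ℤ) (ε v : F) (f : F → F → ℂ) : ℂ :=
    (∑ t ∈ univ.filter (fun t : F × F => t.1 * t.2 = v ^ 2 ∧ χ t.1 = χ v), f t.1 t.2)
  - (∑ t ∈ univ.filter (fun t : F × F => t.1 * t.2 = v ^ 2 ∧ χ t.1 = χ (ε * v)), f t.1 t.2)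
  - (∑ t ∈ univ.filter (fun t : F × F => t.1 * t.2 = ε * v ^ 2 ∧ χ t.1 = χ v), f t.1 t.2)
  + (∑ t ∈ univ.filter (fun t : F × F => t.1 * t.2 = ε * v ^ 2 ∧ χ t.1 = χ (ε * v)), f t.1 t.2)

/-!
Solving `x * y = c` for `y` turns the difference of the sums over `S(c, s)` and `S(c, -s)` into
`s * ∑ x, χ x * f x (c / x)`. As `χ (ε * v) = -χ v`, the combination `T'` is `χ v` times the
difference of this character sum at `c = v ^ 2` and at `c = ε * v ^ 2`. If `f` depends on `x` only,
the sum does not depend on `c`, so the two cancel; if `f` depends on `y` only, substituting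
`t = c / x` extracts the factor `χ c`, which has opposite signs at the two values, so they add up.
-/

theorem mulChar_ne_one_of_apply_eq_neg_one {G : Type*} [CommMonoid G] {χ : MulChar G ℤ} {a : G}
    (ha : χ a = -1) : χ ≠ 1 := by
  rintro rfl
  by_cases hunit : IsUnit a
  · simp [MulChar.one_apply hunit] at ha
  · simp [MulChar.map_nonunit _ hunit] at ha

section MulCharSums

variable {F R M : Type*} [Field F] [Fintype F] [CommRing R] [IsDomain R]
  [AddCommGroup M] [Module R M]

theorem sum_mulChar_smul_apply_mul {χ : MulChar F R} (hχ : χ ≠ 1) (g : F → M) (a : F) :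
    ∑ t, χ t • g (t * a) = χ⁻¹ a • ∑ t, χ t • g t := by
  rcases eq_or_ne a 0 with rfl | ha
  · simp only [mul_zero, ← sum_smul, MulChar.sum_eq_zero_of_ne_one hχ, MulChar.map_zero, zero_smul]
  · rw [smul_sum]
    refine Fintype.sum_equiv (Equiv.mulRight₀ a ha) _ _ fun t => ?_
    have hcancel : χ⁻¹ a * χ (t * a) = χ t := by
      rw [MulChar.inv_apply', ← map_mul, mul_comm t, inv_mul_cancel_left₀ ha]
    rw [Equiv.mulRight₀_apply, smul_smul, hcancel]

theorem sum_mulChar_smul_apply_div {χ : MulChar F R} (hχ : χ ≠ 1) (g : F → M) (c : F) :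
    ∑ x, χ x • g (c / x) = χ c • ∑ t, χ⁻¹ t • g t :=
  calc ∑ x, χ x • g (c / x)
    _ = ∑ t, χ⁻¹ t • g (t * c) :=
      Fintype.sum_equiv (Equiv.inv F) _ _ fun x => by
        rw [Equiv.inv_apply, MulChar.inv_apply', inv_inv, div_eq_inv_mul]
    _ = χ c • ∑ t, χ⁻¹ t • g t := by
      rw [sum_mulChar_smul_apply_mul (inv_ne_one.mpr hχ), inv_inv]

end MulCharSums

section HyperbolaSums

variable {F M : Type*} [Field F] [Fintype F] [DecidableEq F] [AddCommGroup M]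

/-- The sum of `f` over the part `S(c, s) = {(x, y) | x * y = c ∧ χ x = s}` of a hyperbola. -/
def hyperbolaSum (χ : F → ℤ) (c : F) (s : ℤ) (f : F → F → M) : M :=
  ∑ t : F × F with t.1 * t.2 = c ∧ χ t.1 = s, f t.1 t.2

/-- The alternating combination `T'` of hyperbola sums, for summands in any abelian group; for
complex summands it is `Tsum1`. -/
def alternatingHyperbolaSum (χ : F → ℤ) (ε v : F) (f : F → F → M) : M :=
  hyperbolaSum χ (v ^ 2) (χ v) f - hyperbolaSum χ (v ^ 2) (χ (ε * v)) f
    - hyperbolaSum χ (ε * v ^ 2) (χ v) f + hyperbolaSum χ (ε * v ^ 2) (χ (ε * v)) f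

theorem hyperbolaSum_eq_sum_div {χ : F → ℤ} {s : ℤ} (hs : χ 0 ≠ s) (c : F) (f : F → F → M) :
    hyperbolaSum χ c s f = ∑ x with χ x = s, f x (c / x) := by
  rw [hyperbolaSum, sum_filter, Fintype.sum_prod_type, sum_filter]
  refine sum_congr rfl fun x _ => ?_
  rcases eq_or_ne x 0 with rfl | hx
  · simp [hs]
  · have hy (y : F) : x * y = c ↔ y = c / x := by rw [eq_div_iff hx, mul_comm]
    by_cases hχx : χ x = s <;> simp [hy, hχx]

theorem hyperbolaSum_one_sub_hyperbolaSum_neg_one {χ : MulChar F ℤ} (hχ : χ.IsQuadratic)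
    (c : F) (f : F → F → M) :
    hyperbolaSum χ c 1 f - hyperbolaSum χ c (-1) f = ∑ x, χ x • f x (c / x) := by
  have h0 : χ 0 = 0 := MulChar.map_zero χ
  rw [hyperbolaSum_eq_sum_div (by simp [h0]), hyperbolaSum_eq_sum_div (by simp [h0]),
    sum_filter, sum_filter, ← sum_sub_distrib]
  refine sum_congr rfl fun x _ => ?_
  rcases hχ x with h | h | h <;> simp [h]

theorem hyperbolaSum_sub_hyperbolaSum_neg {χ : MulChar F ℤ} (hχ : χ.IsQuadratic)
    (c v : F) (f : F → F → M) :
    hyperbolaSum χ c (χ v) f - hyperbolaSum χ c (-χ v) f = χ v • ∑ x, χ x • f x (c / x) := by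
  rw [← hyperbolaSum_one_sub_hyperbolaSum_neg_one hχ]
  rcases hχ v with h | h | h <;> simp [h]

theorem alternatingHyperbolaSum_eq_smul_sub {χ : MulChar F ℤ} (hχ : χ.IsQuadratic) {ε : F}
    (hε : χ ε = -1) (v : F) (f : F → F → M) :
    alternatingHyperbolaSum χ ε v f =
      χ v • (∑ x, χ x • f x (v ^ 2 / x) - ∑ x, χ x • f x (ε * v ^ 2 / x)) := by
  have hεv : χ (ε * v) = -χ v := by rw [map_mul, hε, neg_one_mul]
  rw [smul_sub, ← hyperbolaSum_sub_hyperbolaSum_neg hχ, ← hyperbolaSum_sub_hyperbolaSum_neg hχ,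
    alternatingHyperbolaSum, hεv]
  abel

theorem alternatingHyperbolaSum_fst {χ : MulChar F ℤ} (hχ : χ.IsQuadratic) {ε : F}
    (hε : χ ε = -1) (v : F) (g : F → M) :
    alternatingHyperbolaSum χ ε v (fun x _ => g x) = 0 := by
  rw [alternatingHyperbolaSum_eq_smul_sub hχ hε, sub_self, smul_zero]

theorem alternatingHyperbolaSum_snd {χ : MulChar F ℤ} (hχ : χ.IsQuadratic) {ε : F}
    (hε : χ ε = -1) (v : F) (g : F → M) :
    alternatingHyperbolaSum χ ε v (fun _ y => g y) = (2 * χ v) • ∑ t, χ t • g t := by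
  have hχ1 : χ ≠ 1 := mulChar_ne_one_of_apply_eq_neg_one hε
  have hcube : χ v ^ 3 = χ v := by rcases hχ v with h | h | h <;> simp [h]
  have hcoeff : χ v * (χ (v ^ 2) - χ (ε * v ^ 2)) = 2 * χ v := by
    rw [map_mul, hε, map_pow]
    linear_combination 2 * hcube
  rw [alternatingHyperbolaSum_eq_smul_sub hχ hε, sum_mulChar_smul_apply_div hχ1,
    sum_mulChar_smul_apply_div hχ1, hχ.inv, ← sub_smul, smul_smul, hcoeff]

theorem Tsum1_eq_alternatingHyperbolaSum (χ : F → ℤ) (ε v : F) (f : F → F → ℂ) :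
    Tsum1 χ ε v f = alternatingHyperbolaSum χ ε v f := rfl

theorem eq_quadraticChar {χ : F → ℤ} (h0 : χ 0 = 0) (h1 : ∀ x, x ≠ 0 → IsSquare x → χ x = 1)
    (hneg : ∀ x, ¬IsSquare x → χ x = -1) : χ = quadraticChar F := by
  funext x
  rcases eq_or_ne x 0 with rfl | hx
  · rw [h0, MulChar.map_zero]
  by_cases hsq : IsSquare x
  · rw [h1 x hx hsq, (quadraticChar_one_iff_isSquare hx).mpr hsq]
  · rw [hneg x hsq, quadraticChar_neg_one_iff_not_isSquare.mpr hsq]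

theorem stmt14_general {ε : F} (hε : ¬IsSquare ε) (v : F) (ψ : F → M) :
    (∀ b : F, alternatingHyperbolaSum (quadraticChar F) ε v (fun x _ => ψ (x * b)) = 0) ∧
    (∀ a : F, alternatingHyperbolaSum (quadraticChar F) ε v (fun _ y => ψ (y * a)) =
      (2 * quadraticChar F v * quadraticChar F a) • ∑ t, quadraticChar F t • ψ t) := by
  have hχ : (quadraticChar F).IsQuadratic := quadraticChar_isQuadratic F
  have hχε : quadraticChar F ε = -1 := quadraticChar_neg_one_iff_not_isSquare.mpr hε
  refine ⟨fun b => alternatingHyperbolaSum_fst hχ hχε v fun x => ψ (x * b), fun a => ?_⟩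
  rw [alternatingHyperbolaSum_snd hχ hχε v fun y => ψ (y * a),
    sum_mulChar_smul_apply_mul (mulChar_ne_one_of_apply_eq_neg_one hχε), hχ.inv, smul_smul]

end HyperbolaSums

/-- Equation (eqn:hatvarphi01) of the paper for `φ₍₁₎`, in raw exponential-sum form:
(i) `T'((x,y) ↦ ψ(x·b)) = 0` for all `b`, and
(ii) `T'((x,y) ↦ ψ(y·a)) = 2·χ(v)·χ(a)·Σ_t χ(t)·ψ(t)` for all `a`. -/
theorem stmt14 (F : Type*) [Field F] [Fintype F] [DecidableEq F]
    (hq : Odd (Fintype.card F))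
    (χ : F → ℤ) (hχ0 : χ 0 = 0)
    (hχ1 : ∀ x : F, x ≠ 0 → IsSquare x → χ x = 1)
    (hχ2 : ∀ x : F, ¬ IsSquare x → χ x = -1)
    (ψ : F → ℂ) (hψadd : ∀ x y : F, ψ (x + y) = ψ x * ψ y) (hψ : ∃ x : F, ψ x ≠ 1)
    (ε : F) (hε0 : ε ≠ 0) (hε : ¬ IsSquare ε) (v : F) (hv : v ≠ 0) :
    (∀ b : F, Tsum1 χ ε v (fun x _ => ψ (x * b)) = 0) ∧
    (∀ a : F, Tsum1 χ ε v (fun _ y => ψ (y * a)) =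
      2 * (χ v : ℂ) * (χ a : ℂ) * ∑ t : F, (χ t : ℂ) * ψ t) := by
  obtain rfl := eq_quadraticChar hχ0 hχ1 hχ2
  simpa only [Tsum1_eq_alternatingHyperbolaSum, zsmul_eq_mul, Int.cast_mul, Int.cast_ofNat]
    using stmt14_general hε v ψ
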